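/- arXiv:2301.08057 — 2 statements merged into one kernel-verified Lean document; each statement's English description precedes it below -/
import Mathlib

section
/- Amplitude amplification acts as a rotation by 2θ on its invariant subspace: Q e₀ = cos(2θ)·e₀ − sin(2θ)·e₁ and Q e₁ = sin(2θ)·e₀ + cos(2θ)·e₁. -/
/-!
The reflection `R_t` fixes `e₀` and negates `e₁`, so `Q e₀ = -R_u e₀` and `Q e₁ = R_u e₁`.
Since `⟪u, e₀⟫ = sin θ` and `⟪u, e₁⟫ = cos θ`, expanding `R_u` in `e₀, e₁` gives
coefficients that the double-angle formulas identify with those of the rotation by `2θ`.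
-/

open scoped InnerProductSpace

/-- Amplitude amplification acts as a rotation by `2θ` on its invariant subspace:
`Q e₀ = cos(2θ)·e₀ − sin(2θ)·e₁` and `Q e₁ = sin(2θ)·e₀ + cos(2θ)·e₁`. -/
theorem amplitude_amplification_rotation {H : Type*} [NormedAddCommGroup H]
    [InnerProductSpace ℂ H]
    (e₀ e₁ : H) (h₀ : ‖e₀‖ = 1) (h₁ : ‖e₁‖ = 1) (horth : ⟪e₀, e₁⟫_ℂ = 0)
    (θ : ℝ) (u : H)
    (hu : u = (Real.sin θ : ℂ) • e₀ + (Real.cos θ : ℂ) • e₁)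
    (Ru Rt Q : H → H)
    (hRu : ∀ x, Ru x = (2 * ⟪u, x⟫_ℂ) • u - x)
    (hRt : ∀ x, Rt x = x - (2 * ⟪e₁, x⟫_ℂ) • e₁)
    (hQ : ∀ x, Q x = -(Ru (Rt x))) :
    Q e₀ = (Real.cos (2 * θ) : ℂ) • e₀ - (Real.sin (2 * θ) : ℂ) • e₁ ∧
    Q e₁ = (Real.sin (2 * θ) : ℂ) • e₀ + (Real.cos (2 * θ) : ℂ) • e₁ := by
  have h00 : ⟪e₀, e₀⟫_ℂ = 1 := by simp [inner_self_eq_norm_sq_to_K, h₀]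
  have h11 : ⟪e₁, e₁⟫_ℂ = 1 := by simp [inner_self_eq_norm_sq_to_K, h₁]
  have h10 : ⟪e₁, e₀⟫_ℂ = 0 := inner_eq_zero_symm.mp horth
  have hu0 : ⟪u, e₀⟫_ℂ = (Real.sin θ : ℂ) := by
    rw [hu, inner_add_left, inner_smul_left, inner_smul_left, h00, h10, Complex.conj_ofReal]
    ring
  have hu1 : ⟪u, e₁⟫_ℂ = (Real.cos θ : ℂ) := by
    rw [hu, inner_add_left, inner_smul_left, inner_smul_left, h11, horth, Complex.conj_ofReal,
      Complex.conj_ofReal]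
    ring
  have hsc : (Real.sin θ : ℂ) ^ 2 + (Real.cos θ : ℂ) ^ 2 = 1 := by
    exact_mod_cast Real.sin_sq_add_cos_sq θ
  have hs2 : (Real.sin (2 * θ) : ℂ) = 2 * Real.sin θ * Real.cos θ := by
    exact_mod_cast Real.sin_two_mul θ
  have hc2 : (Real.cos (2 * θ) : ℂ) = 2 * (Real.cos θ : ℂ) ^ 2 - 1 := by
    exact_mod_cast Real.cos_two_mul θ
  have ht0 : Rt e₀ = e₀ := by rw [hRt, h10]; simp
  have ht1 : Rt e₁ = -e₁ := by rw [hRt, h11]; module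
  constructor
  · rw [hQ, ht0, hRu, hu0, hu, hs2, hc2]
    -- The `e₀`-coefficients `1 - 2 sin² θ` and `2 cos² θ - 1` differ by `-2` times the defect of `hsc`.
    linear_combination (norm := module) (-2 * hsc) • e₀
  · rw [hQ, ht1, hRu, inner_neg_right, hu1, hu, hs2, hc2]
    module
end

section
/- Eigen-decomposition of the amplitude amplification operator on its invariant subspace: Q(e₁ − i·e₀) = e^{2iθ}·(e₁ − i·e₀) and Q(e₁ + i·e₀) = e^{−2iθ}·(e₁ + i·e₀); in particular, the eigenvalues of Q on span{e₀, e₁} are e^{2iθ} and e^{−2iθ}. -/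
/-!
In the orthonormal pair `e₀, e₁` the operator `Q = -R_u ∘ R_t` is minus a product of two
reflections of the plane, and works out to the rotation by `2θ`: it sends the coordinates `(a, b)` to
`(cos 2θ · a + sin 2θ · b, cos 2θ · b - sin 2θ · a)` (`amplification_eq_rotation`).
The vectors `(∓i, 1)` diagonalize every plane rotation, and by Euler's formula the eigenvalues
are `cos 2θ ± i sin 2θ = e^{±2iθ}`.
-/

open scoped InnerProductSpace

/-- The amplification operator acts on the span of `e₀, e₁` as the rotation by `2θ`. -/
theorem amplification_eq_rotation {H : Type*} [NormedAddCommGroup H]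
    [InnerProductSpace ℂ H]
    (e₀ e₁ : H) (h₀ : ‖e₀‖ = 1) (h₁ : ‖e₁‖ = 1) (horth : ⟪e₀, e₁⟫_ℂ = 0)
    (θ : ℝ) (u : H)
    (hu : u = (Real.sin θ : ℂ) • e₀ + (Real.cos θ : ℂ) • e₁)
    (Ru Rt Q : H → H)
    (hRu : ∀ x, Ru x = (2 * ⟪u, x⟫_ℂ) • u - x)
    (hRt : ∀ x, Rt x = x - (2 * ⟪e₁, x⟫_ℂ) • e₁)
    (hQ : ∀ x, Q x = -(Ru (Rt x))) (a b : ℂ) :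
    Q (a • e₀ + b • e₁) =
      (Complex.cos (2 * θ) * a + Complex.sin (2 * θ) * b) • e₀ +
      (Complex.cos (2 * θ) * b - Complex.sin (2 * θ) * a) • e₁ := by
  have horth' : ⟪e₁, e₀⟫_ℂ = 0 := inner_eq_zero_symm.mp horth
  have h00 : ⟪e₀, e₀⟫_ℂ = 1 := by simp [inner_self_eq_norm_sq_to_K, h₀]
  have h11 : ⟪e₁, e₁⟫_ℂ = 1 := by simp [inner_self_eq_norm_sq_to_K, h₁]
  have ht : Rt (a • e₀ + b • e₁) = a • e₀ - b • e₁ := by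
    rw [hRt, inner_add_right, inner_smul_right, inner_smul_right, horth', h11]
    module
  have hin : ⟪u, a • e₀ - b • e₁⟫_ℂ = Complex.sin θ * a - Complex.cos θ * b := by
    rw [hu]
    simp only [inner_add_left, inner_sub_right, inner_smul_left, inner_smul_right, horth,
      horth', h00, h11, Complex.conj_ofReal]
    rw [Complex.ofReal_sin, Complex.ofReal_cos]
    ring
  rw [hQ, ht, hRu, hin, hu, Complex.ofReal_sin, Complex.ofReal_cos, Complex.sin_two_mul,
    Complex.cos_two_mul]
  have hsq := Complex.sin_sq_add_cos_sq (θ : ℂ)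
  match_scalars
  · linear_combination (-2 * a) * hsq
  · ring

/-- Eigen-decomposition of the amplitude amplification operator on its invariant subspace:
`Q(e₁ − i·e₀) = e^{2iθ}·(e₁ − i·e₀)` and `Q(e₁ + i·e₀) = e^{−2iθ}·(e₁ + i·e₀)`. -/
theorem amplitude_amplification_eigenvectors {H : Type*} [NormedAddCommGroup H]
    [InnerProductSpace ℂ H]
    (e₀ e₁ : H) (h₀ : ‖e₀‖ = 1) (h₁ : ‖e₁‖ = 1) (horth : ⟪e₀, e₁⟫_ℂ = 0)
    (θ : ℝ) (u : H)
    (hu : u = (Real.sin θ : ℂ) • e₀ + (Real.cos θ : ℂ) • e₁)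
    (Ru Rt Q : H → H)
    (hRu : ∀ x, Ru x = (2 * ⟪u, x⟫_ℂ) • u - x)
    (hRt : ∀ x, Rt x = x - (2 * ⟪e₁, x⟫_ℂ) • e₁)
    (hQ : ∀ x, Q x = -(Ru (Rt x))) :
    Q (e₁ - Complex.I • e₀) =
      Complex.exp (2 * θ * Complex.I) • (e₁ - Complex.I • e₀) ∧
    Q (e₁ + Complex.I • e₀) =
      Complex.exp (-(2 * θ * Complex.I)) • (e₁ + Complex.I • e₀) := by
  have rot := amplification_eq_rotation e₀ e₁ h₀ h₁ horth θ u hu Ru Rt Q hRu hRt hQ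
  have hI := Complex.I_sq
  constructor
  · rw [show e₁ - Complex.I • e₀ = (-Complex.I) • e₀ + (1 : ℂ) • e₁ by module, rot,
      Complex.exp_mul_I]
    match_scalars
    · linear_combination Complex.sin (2 * θ) * hI
    · ring
  · rw [show e₁ + Complex.I • e₀ = Complex.I • e₀ + (1 : ℂ) • e₁ by module, rot,
      ← neg_mul, Complex.exp_mul_I, Complex.cos_neg, Complex.sin_neg]
    match_scalars
    · linear_combination Complex.sin (2 * θ) * hI
    · ring
end
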